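/- For every n ≥ 2, the dimension over ℚ of the space Inv(sl₂^{⊗n}) of invariant tensors of the n-fold tensor power of the adjoint representation of sl₂ equals the Riordan number Rₙ. -/

import Mathlib

/- The dimension of the space Inv(sl₂^{⊗n}) of invariant tensors of the n-fold
   tensor power of the adjoint representation of sl₂ (traceless 2×2 matrices
   over ℚ) equals the Riordan number Rₙ, for every n ≥ 2.  The Riordan numbers
   are quantified via their defining recurrence. -/

open scoped TensorProduct

set_option synthInstance.maxHeartbeats 1000000
set_option maxHeartbeats 1000000

noncomputable section

abbrev sl2 : Type := ↥(LieAlgebra.SpecialLinear.sl (Fin 2) ℚ)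

/-- The n-fold tensor power sl₂^{⊗n}. -/
abbrev TP (n : ℕ) : Type := ⨂[ℚ] (_ : Fin n), sl2

/-- The adjoint action of `x ∈ sl₂` on `sl₂^{⊗n}`, extended as a derivation:
`x · (m₁ ⊗ ⋯ ⊗ mₙ) = Σᵢ m₁ ⊗ ⋯ ⊗ [x, mᵢ] ⊗ ⋯ ⊗ mₙ`. -/
def actOn (n : ℕ) (x : sl2) : TP n →ₗ[ℚ] TP n :=
  ∑ i : Fin n,
    PiTensorProduct.map (fun j => if j = i then LieAlgebra.ad ℚ sl2 x else LinearMap.id)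

/-- The space of invariant tensors of `sl₂^{⊗n}`. -/
def Invariants (n : ℕ) : Submodule ℚ (TP n) :=
  ⨅ x : sl2, LinearMap.ker (actOn n x)

section Abstract
variable {V : Type*} [AddCommGroup V] [Module ℚ V]

theorem aux_inj (X Y K : V →ₗ[ℚ] V) (hKX : ∀ v, K (X v) = X (K v) + (2:ℚ) • X v)
    (hXY : ∀ v, X (Y v) = Y (X v) + K v) (v : V) (hv : K v = (2:ℚ) • v)
    (hYX : Y (X v) = (-2:ℚ) • v) (N : ℕ) (hN : (X ^ N) v = 0) : v = 0 := by
  have hK : ∀ j : ℕ, K ((X ^ j) v) = (2 + 2 * j : ℚ) • (X ^ j) v := by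
    intro j
    induction j with
    | zero => simpa using hv
    | succ j ih =>
      rw [pow_succ', Module.End.mul_apply, hKX, ih, map_smul]
      push_cast
      module
  have hY : ∀ j : ℕ, Y ((X ^ (j+1)) v) = (-((j+1) * (j+2)) : ℚ) • (X ^ j) v := by
    intro j
    induction j with
    | zero => simpa using hYX
    | succ j ih =>
      have h1 := hXY ((X ^ (j+1)) v)
      rw [ih, hK, map_smul, ← Module.End.mul_apply X, ← pow_succ', ← Module.End.mul_apply X,
        ← pow_succ'] at h1
      rw [← sub_eq_iff_eq_add] at h1
      rw [← h1]
      push_cast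
      module
  induction N with
  | zero => simpa using hN
  | succ N ih =>
    apply ih
    have := hY N
    rw [hN, map_zero] at this
    have hne : (-((N+1) * (N+2)) : ℚ) ≠ 0 := by
      have : (0:ℚ) < (N+1) * (N+2) := by positivity
      linarith
    exact (smul_eq_zero.mp this.symm).resolve_left hne

end Abstract

section Action

theorem map_ite_eq (n : ℕ) (i : Fin n) (u : sl2 →ₗ[ℚ] sl2) :
    PiTensorProduct.map (fun j => if j = i then u else LinearMap.id) =
    PiTensorProduct.mapMultilinear ℚ (fun _ : Fin n => sl2) (fun _ => sl2)
      (Function.update (fun _ => LinearMap.id) i u) := by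
  simp only [PiTensorProduct.mapMultilinear_apply]
  congr 1
  funext j
  by_cases h : j = i
  · subst h; simp
  · simp [h]

def slot (n : ℕ) (i : Fin n) : (sl2 →ₗ[ℚ] sl2) →ₗ[ℚ] (TP n →ₗ[ℚ] TP n) :=
  (PiTensorProduct.mapMultilinear ℚ (fun _ : Fin n => sl2) (fun _ => sl2)).toLinearMap
    (fun _ => LinearMap.id) i

theorem slot_apply (n : ℕ) (i : Fin n) (u : sl2 →ₗ[ℚ] sl2) : slot n i u =
    PiTensorProduct.map (fun j => if j = i then u else LinearMap.id) := by
  rw [map_ite_eq]; rfl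

theorem actOn_eq (n : ℕ) (x : sl2) : actOn n x = ∑ i, slot n i (LieAlgebra.ad ℚ sl2 x) := by
  simp only [slot_apply]; rfl

theorem slot_mul (n : ℕ) (i : Fin n) (u v : sl2 →ₗ[ℚ] sl2) :
    slot n i u * slot n i v = slot n i (u * v) := by
  simp only [slot_apply]
  rw [← PiTensorProduct.map_mul]
  congr 1; funext j
  split_ifs <;> rfl

theorem slot_comm (n : ℕ) (i k : Fin n) (h : i ≠ k) (u v : sl2 →ₗ[ℚ] sl2) :
    slot n i u * slot n k v = slot n k v * slot n i u := by
  simp only [slot_apply]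
  rw [← PiTensorProduct.map_mul, ← PiTensorProduct.map_mul]
  congr 1; funext j
  by_cases h1 : j = i
  · have h2 : j ≠ k := by rintro rfl; exact h h1.symm
    simp only [h1, h, if_true, if_false]; rfl
  · simp only [h1, if_false]; rfl

theorem actOn_lie (n : ℕ) (x y : sl2) :
    actOn n x * actOn n y - actOn n y * actOn n x = actOn n ⁅x, y⁆ := by
  simp only [actOn_eq]
  rw [Finset.sum_mul_sum, Finset.sum_mul_sum, Finset.sum_comm, ← Finset.sum_sub_distrib]
  refine Finset.sum_congr rfl fun i _ => ?_
  rw [← Finset.sum_sub_distrib, Finset.sum_eq_single i]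
  · rw [slot_mul, slot_mul, ← map_sub]
    congr 1
    ext1 z
    simp only [LinearMap.sub_apply, Module.End.mul_apply, LieAlgebra.ad_apply]
    rw [lie_lie]
  · intro k _ hk
    rw [slot_comm n k i hk, sub_self]
  · simp

def actL (n : ℕ) : sl2 →ₗ[ℚ] (TP n →ₗ[ℚ] TP n) :=
  ∑ i, (slot n i) ∘ₗ (LieAlgebra.ad ℚ sl2 : sl2 →ₗ[ℚ] Module.End ℚ sl2)

theorem actL_apply (n : ℕ) (x : sl2) : actL n x = actOn n x := by
  rw [actOn_eq, actL, LinearMap.sum_apply]; rfl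

theorem actOn_tprod (n : ℕ) (x : sl2) (m : Fin n → sl2) (c : Fin n → ℚ)
    (h : ∀ i, ⁅x, m i⁆ = c i • m i) :
    actOn n x (PiTensorProduct.tprod ℚ m) = (∑ i, c i) • PiTensorProduct.tprod ℚ m := by
  rw [actOn, LinearMap.sum_apply, Finset.sum_smul]
  refine Finset.sum_congr rfl fun i _ => ?_
  rw [PiTensorProduct.map_tprod]
  have : (fun j => (if j = i then LieAlgebra.ad ℚ sl2 x else LinearMap.id) (m j))
      = Function.update m i (c i • m i) := by
    funext j
    by_cases hj : j = i
    · subst hj; simp [h]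
    · simp [hj]
  rw [this, MultilinearMap.map_update_smul, Function.update_eq_self]

end Action

section Basis2

theorem mem_sl2 (A : Matrix (Fin 2) (Fin 2) ℚ) :
    A ∈ LieAlgebra.SpecialLinear.sl (Fin 2) ℚ ↔ A 0 0 + A 1 1 = 0 := by
  have : A ∈ LieAlgebra.SpecialLinear.sl (Fin 2) ℚ ↔ Matrix.trace A = 0 := Iff.rfl
  rw [this, Matrix.trace_fin_two]

def mk2 (a b c : ℚ) : sl2 := ⟨!![b, c; a, -b], by rw [mem_sl2]; simp⟩

def sl2Equiv : sl2 ≃ₗ[ℚ] (Fin 3 → ℚ) where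
  toFun x := ![x.1 1 0, x.1 0 0, x.1 0 1]
  invFun v := mk2 (v 0) (v 1) (v 2)
  map_add' x y := by funext i; fin_cases i <;> simp
  map_smul' c x := by funext i; fin_cases i <;> simp
  left_inv x := by
    have := (mem_sl2 x.1).mp x.2
    ext i j
    fin_cases i <;> fin_cases j <;> simp [mk2]
    linarith
  right_inv v := by funext i; fin_cases i <;> simp [mk2]

def bs : Module.Basis (Fin 3) ℚ sl2 := Module.Basis.ofEquivFun sl2Equiv

def eH : sl2 := mk2 0 1 0
def eE : sl2 := mk2 0 0 1
def eF : sl2 := mk2 1 0 0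

theorem bs_apply (i : Fin 3) : bs i = mk2 ((Pi.single i 1 : Fin 3 → ℚ) 0)
    ((Pi.single i 1 : Fin 3 → ℚ) 1) ((Pi.single i 1 : Fin 3 → ℚ) 2) := by
  rw [bs, Module.Basis.coe_ofEquivFun]
  rfl

theorem lie_bs (i : Fin 3) : ⁅eH, bs i⁆ = (2 * ((i : ℕ) - 1) : ℚ) • bs i := by
  rw [bs_apply]
  ext a b
  rw [LieAlgebra.SpecialLinear.sl_bracket]
  fin_cases i <;> fin_cases a <;> fin_cases b <;> simp [mk2, eH] <;> norm_num

theorem lie_EF : ⁅eE, eF⁆ = eH := by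
  ext a b
  rw [LieAlgebra.SpecialLinear.sl_bracket]
  fin_cases a <;> fin_cases b <;> simp [mk2, eH, eE, eF]

theorem lie_HE : ⁅eH, eE⁆ = (2:ℚ) • eE := by
  ext a b
  rw [LieAlgebra.SpecialLinear.sl_bracket]
  fin_cases a <;> fin_cases b <;> simp [mk2, eH, eE] <;> norm_num

theorem lie_HF : ⁅eH, eF⁆ = (-2:ℚ) • eF := by
  ext a b
  rw [LieAlgebra.SpecialLinear.sl_bracket]
  fin_cases a <;> fin_cases b <;> simp [mk2, eH, eF] <;> norm_num

theorem sl2_decomp (x : sl2) : ∃ a b c : ℚ, x = a • eF + b • eH + c • eE := by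
  refine ⟨x.1 1 0, x.1 0 0, x.1 0 1, ?_⟩
  have := (mem_sl2 x.1).mp x.2
  ext i j
  fin_cases i <;> fin_cases j <;> simp [mk2, eH, eE, eF]
  linarith

end Basis2

section Count

/-- weight set -/
def WS (n : ℕ) (k : ℤ) : Finset (Fin n → Fin 3) :=
  Finset.univ.filter fun s => ∑ i, (((s i : ℕ) : ℤ) - 1) = k

def T (n : ℕ) (k : ℤ) : ℤ := (WS n k).card

theorem T_zero (k : ℤ) : T 0 k = if k = 0 then 1 else 0 := by
  unfold T WS
  by_cases h : k = 0
  · subst h; simp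
  · simp [h, Ne.symm h]

theorem T_succ (n : ℕ) (k : ℤ) : T (n+1) k = T n (k-1) + T n k + T n (k+1) := by
  have key : ∀ m k, T m k = ∑ s : Fin m → Fin 3,
      if ∑ i, (((s i : ℕ) : ℤ) - 1) = k then (1:ℤ) else 0 := by
    intro m k
    rw [T, WS, Finset.card_filter]; push_cast; rfl
  simp only [key]
  rw [← (Fin.consEquiv (fun _ : Fin (n+1) => Fin 3)).sum_comp, Fintype.sum_prod_type,
    Fin.sum_univ_three]
  simp only [Fin.consEquiv_apply, Fin.sum_univ_succ, Fin.cons_zero, Fin.cons_succ]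
  have e1 : ∀ a : ℤ, (((0 : Fin 3) : ℕ) : ℤ) - 1 + a = k ↔ a = k + 1 := by
    intro a; simp; omega
  have e2 : ∀ a : ℤ, (((1 : Fin 3) : ℕ) : ℤ) - 1 + a = k ↔ a = k := by
    intro a; simp
  have e3 : ∀ a : ℤ, (((2 : Fin 3) : ℕ) : ℤ) - 1 + a = k ↔ a = k - 1 := by
    intro a; simp; omega
  simp only [e1, e2, e3]
  ring

theorem T_D (n : ℕ) : ∀ k : ℤ,
    (n - k + 1) * T n (k-1) = k * T n k + (n + k + 1) * T n (k+1) := by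
  induction n with
  | zero =>
    intro k
    simp only [T_zero]
    rcases eq_or_ne k 0 with rfl | h0
    · simp
    rcases eq_or_ne k 1 with rfl | h1
    · simp
    rcases eq_or_ne k (-1) with rfl | h2
    · simp
    rw [if_neg (by omega), if_neg h0, if_neg (by omega)]; simp
  | succ n ih =>
    intro k
    have h1 := ih (k-1)
    have h2 := ih k
    have h3 := ih (k+1)
    simp only [T_succ]
    rw [sub_add_cancel] at h1 ⊢
    rw [add_sub_cancel_right] at h3 ⊢
    push_cast
    linarith

def r (n : ℕ) : ℤ := T n 0 - T n 1

theorem ab_rec (n : ℕ) : T (n+1) 0 = T n 0 + 2 * T n 1 ∧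
    (n + 2) * T (n+1) 1 = (2*n+2) * T n 0 + (n+1) * T n 1 := by
  have h0 := T_D n 0
  have h1 := T_D n 1
  have s0 := T_succ n 0
  have s1 := T_succ n 1
  norm_num at h0 h1 s0 s1
  have : T n (-1) = T n 1 := by
    rcases h0 with h | h
    · exact h
    · omega
  constructor
  · rw [s0, this]; ring
  · rw [s1]; linarith

theorem r_rec (n : ℕ) : (n + 3) * r (n+2) = (n + 1) * (2 * r (n+1) + 3 * r n) := by
  obtain ⟨a1, b1⟩ := ab_rec n
  obtain ⟨a2, b2⟩ := ab_rec (n+1)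
  unfold r
  push_cast at b2
  rw [show n + 1 + 1 = n + 2 from rfl] at a2 b2
  have hb : ((n:ℤ) + 3) * T (n+2) 1 = (2*n+4) * T (n+1) 0 + (n+2) * T (n+1) 1 := by linarith
  rw [mul_sub, hb, a2, b1, a1]
  linarith

theorem r_vals : r 2 = 1 ∧ r 3 = 1 := by
  constructor <;> simp [r, T_succ, T_zero]

end Count

section Weights
variable (n : ℕ)

def bt : Module.Basis (Fin n → Fin 3) ℚ (TP n) := Basis.piTensorProduct (fun _ => bs)

def W (k : ℤ) : Submodule ℚ (TP n) :=
  LinearMap.ker (actOn n eH - (2 * k : ℚ) • LinearMap.id)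

theorem mem_W (k : ℤ) (v : TP n) : v ∈ W n k ↔ actOn n eH v = (2 * k : ℚ) • v := by
  simp [W, sub_eq_zero]

theorem H_bt (s : Fin n → Fin 3) :
    actOn n eH (bt n s) = (2 * ((∑ i, (((s i : ℕ) : ℤ) - 1) : ℤ) : ℚ)) • bt n s := by
  rw [bt, Basis.piTensorProduct_apply,
    actOn_tprod n eH _ (fun i => 2 * (((s i : ℕ) : ℚ) - 1)) (fun i => lie_bs (s i))]
  congr 1
  push_cast
  rw [Finset.mul_sum]

theorem H_repr (v : TP n) (s : Fin n → Fin 3) :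
    (bt n).repr (actOn n eH v) s =
      (2 * ((∑ i, (((s i : ℕ) : ℤ) - 1) : ℤ) : ℚ)) * (bt n).repr v s := by
  have : (bt n).coord s ∘ₗ actOn n eH =
      (2 * ((∑ i, (((s i : ℕ) : ℤ) - 1) : ℤ) : ℚ)) • (bt n).coord s := by
    apply (bt n).ext
    intro t
    simp only [LinearMap.comp_apply, H_bt, map_smul, LinearMap.smul_apply, Module.Basis.coord_apply,
      Module.Basis.repr_self, Finsupp.single_apply, smul_eq_mul]
    by_cases h : t = s
    · subst h; rfl
    · simp [h]
  exact congrArg (fun f => f v) this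

theorem W_eq (k : ℤ) : W n k = Submodule.span ℚ (bt n '' (WS n k : Set (Fin n → Fin 3))) := by
  ext v
  rw [Module.Basis.mem_span_image, mem_W]
  constructor
  · intro h s hs
    have h1 := H_repr n v s
    rw [h, map_smul, Finsupp.smul_apply, smul_eq_mul] at h1
    have h2 := mul_right_cancel₀ (Finsupp.mem_support_iff.mp hs) h1
    simp only [WS, Finset.coe_filter, Set.mem_setOf_eq, Finset.mem_univ, true_and]
    have h3 : (k : ℚ) = ((∑ i, (((s i : ℕ) : ℤ) - 1) : ℤ) : ℚ) := by linarith
    exact_mod_cast h3.symm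
  · intro h
    apply (bt n).ext_elem
    intro s
    rw [H_repr, map_smul, Finsupp.smul_apply, smul_eq_mul]
    by_cases hs : (bt n).repr v s = 0
    · simp [hs]
    · have h2 := h (Finsupp.mem_support_iff.mpr hs)
      simp only [WS, Finset.coe_filter, Set.mem_setOf_eq, Finset.mem_univ, true_and] at h2
      rw [h2]

theorem finrank_W (k : ℤ) : (Module.finrank ℚ (W n k) : ℤ) = T n k := by
  rw [W_eq, T]
  congr 1
  classical
  rw [← Finset.coe_image, finrank_span_finset_eq_card,
    Finset.card_image_of_injective _ (bt n).injective]
  have := (bt n).linearIndependent.linearIndepOn_id.mono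
    (t := ((WS n k).image (bt n) : Set (TP n))) (by simp)
  exact this

theorem W_bot (k : ℤ) (hk : (n : ℤ) < k ∨ k < -n) : W n k = ⊥ := by
  rw [W_eq]
  have : WS n k = ∅ := by
    rw [WS, Finset.filter_eq_empty_iff]
    intro s _ hs
    have h1 : ∑ i, (((s i : ℕ) : ℤ) - 1) ≤ ∑ i : Fin n, (1:ℤ) :=
      Finset.sum_le_sum fun i _ => by omega
    have h2 : ∑ i : Fin n, (-1:ℤ) ≤ ∑ i, (((s i : ℕ) : ℤ) - 1) :=
      Finset.sum_le_sum fun i _ => by omega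
    simp only [Finset.sum_const, Finset.card_univ, Fintype.card_fin, nsmul_eq_mul] at h1 h2
    omega
  simp [this]

theorem comm_apply (x y : sl2) (v : TP n) :
    actOn n x (actOn n y v) = actOn n y (actOn n x v) + actOn n ⁅x, y⁆ v := by
  rw [← actOn_lie]
  simp

theorem act_smul (c : ℚ) (x : sl2) : actOn n (c • x) = c • actOn n x := by
  rw [← actL_apply, map_smul, actL_apply]

theorem cHE (v : TP n) : actOn n eH (actOn n eE v) =
    actOn n eE (actOn n eH v) + (2:ℚ) • actOn n eE v := by
  rw [comm_apply, lie_HE, act_smul]; rfl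

theorem cHF (v : TP n) : actOn n eH (actOn n eF v) =
    actOn n eF (actOn n eH v) + (-2:ℚ) • actOn n eF v := by
  rw [comm_apply, lie_HF, act_smul]; rfl

theorem cEF (v : TP n) : actOn n eE (actOn n eF v) =
    actOn n eF (actOn n eE v) + actOn n eH v := by
  rw [comm_apply, lie_EF]

theorem E_W (k : ℤ) (v : TP n) (h : v ∈ W n k) : actOn n eE v ∈ W n (k+1) := by
  rw [mem_W] at *
  rw [cHE, h, map_smul]; push_cast; module

theorem F_W (k : ℤ) (v : TP n) (h : v ∈ W n k) : actOn n eF v ∈ W n (k-1) := by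
  rw [mem_W] at *
  rw [cHF, h, map_smul]; push_cast; module

theorem E_pow (k : ℤ) (v : TP n) (h : v ∈ W n k) (j : ℕ) :
    ((actOn n eE)^j) v ∈ W n (k+j) := by
  induction j with
  | zero => simpa using h
  | succ j ih =>
    rw [pow_succ', Module.End.mul_apply]
    have := E_W n _ _ ih
    push_cast
    rwa [← add_assoc]

theorem F_pow (k : ℤ) (v : TP n) (h : v ∈ W n k) (j : ℕ) :
    ((actOn n eF)^j) v ∈ W n (k-j) := by
  induction j with
  | zero => simpa using h
  | succ j ih =>
    rw [pow_succ', Module.End.mul_apply]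
    have := F_W n _ _ ih
    push_cast
    rwa [← sub_sub]

theorem EF_inj (v : TP n) (h : v ∈ W n 1) (h0 : actOn n eE (actOn n eF v) = 0) : v = 0 := by
  have hv := (mem_W n 1 v).mp h
  refine aux_inj (actOn n eE) (actOn n eF) (actOn n eH) (cHE n) (cEF n) v ?_ ?_ (n+1) ?_
  · rw [hv]; simp
  · have := cEF n v
    rw [h0, hv] at this
    rw [eq_neg_of_add_eq_zero_left this.symm, ← neg_smul]; simp
  · have := E_pow n 1 v h (n+1)
    rwa [W_bot n _ (by left; push_cast; omega), Submodule.mem_bot] at this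

theorem F_zero (v : TP n) (h : v ∈ W n 0) (h0 : actOn n eE v = 0) : actOn n eF v = 0 := by
  have h1 := F_W n 0 v h
  have hv := (mem_W n _ _).mp h1
  have hv0 := (mem_W n _ _).mp h
  refine aux_inj (actOn n eF) (actOn n eE) (-actOn n eH) ?_ ?_ (actOn n eF v) ?_ ?_ (n+1) ?_
  · intro w
    rw [LinearMap.neg_apply, LinearMap.neg_apply, cHF, map_neg]; module
  · intro w
    rw [LinearMap.neg_apply, cEF]; abel
  · rw [LinearMap.neg_apply, hv]; push_cast; module
  · have e0 : actOn n eE (actOn n eF v) = 0 := by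
      rw [cEF, h0, hv0]; simp
    rw [cEF, e0, hv, map_zero, zero_add]; push_cast; norm_num
  · have := F_pow n _ _ h1 (n+1)
    rwa [W_bot n _ (by right; push_cast; omega), Submodule.mem_bot] at this

instance : FiniteDimensional ℚ (TP n) := Module.Basis.finiteDimensional_of_finite (bt n)

theorem inv_eq : Invariants n = W n 0 ⊓ LinearMap.ker (actOn n eE) := by
  ext v
  simp only [Invariants, Submodule.mem_iInf, LinearMap.mem_ker, Submodule.mem_inf]
  constructor
  · intro h
    refine ⟨?_, h eE⟩
    rw [mem_W, h]; simp
  · rintro ⟨h, hE⟩ x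
    have hF := F_zero n v h hE
    have hH := (mem_W n _ _).mp h
    obtain ⟨a, b, c, rfl⟩ := sl2_decomp x
    rw [← actL_apply]
    simp only [map_add, map_smul, actL_apply, LinearMap.add_apply, LinearMap.smul_apply, hE, hF, hH]
    simp

theorem map_E : (W n 0).map (actOn n eE) = W n 1 := by
  apply le_antisymm
  · rintro _ ⟨v, hv, rfl⟩
    simpa using E_W n 0 v hv
  · have hm : ∀ v ∈ W n 1, (actOn n eE * actOn n eF) v ∈ W n 1 := by
      intro v hv
      simpa using E_W n _ _ (F_W n 1 v hv)
    have hinj : Function.Injective ((actOn n eE * actOn n eF).restrict hm) := by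
      rw [← LinearMap.ker_eq_bot, LinearMap.ker_eq_bot']
      rintro ⟨v, hv⟩ h
      have h' := congrArg Subtype.val h
      exact Subtype.ext (EF_inj n v hv h')
    have hs := LinearMap.surjective_of_injective hinj
    intro w hw
    obtain ⟨v, hv⟩ := hs ⟨w, hw⟩
    refine ⟨actOn n eF v.1, ?_, congrArg Subtype.val hv⟩
    simpa using F_W n 1 v.1 v.2

theorem finrank_inv : (Module.finrank ℚ (Invariants n) : ℤ) = r n := by
  have h := LinearMap.finrank_range_add_finrank_ker ((actOn n eE).domRestrict (W n 0))
  rw [LinearMap.range_domRestrict, map_E, LinearMap.ker_domRestrict] at h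
  have h2 : Module.finrank ℚ (Invariants n) =
      Module.finrank ℚ ((LinearMap.ker (actOn n eE)).comap (W n 0).subtype) := by
    rw [inv_eq, ← Submodule.map_comap_subtype, Submodule.finrank_map_subtype_eq]
  rw [r, ← finrank_W, ← finrank_W, h2, ← h]
  push_cast
  simp [Submodule.submoduleOf]

end Weights

theorem finrank_invariants_eq_riordan
    (R : ℕ → ℕ) (hR2 : R 2 = 1) (hR3 : R 3 = 1)
    (hRrec : ∀ n, 4 ≤ n → (n + 1) * R n = (n - 1) * (2 * R (n - 1) + 3 * R (n - 2))) :
    ∀ n, 2 ≤ n → Module.finrank ℚ (Invariants n) = R n := by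
  have key : ∀ n, (R (n+2) : ℤ) = r (n+2) ∧ (R (n+3) : ℤ) = r (n+3) := by
    intro n
    induction n with
    | zero => simp [hR2, hR3, r_vals.1, r_vals.2]
    | succ n ih =>
      obtain ⟨h1, h2⟩ := ih
      refine ⟨h2, ?_⟩
      have h3 := hRrec (n+4) (by omega)
      rw [show n + 4 - 1 = n + 3 by omega, show n + 4 - 2 = n + 2 by omega] at h3
      have h4 := r_rec (n+2)
      have h5 : ((n:ℤ) + 5) * R (n+4) = (n+3) * (2 * R (n+3) + 3 * R (n+2)) := by
        have := congrArg (Nat.cast : ℕ → ℤ) h3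
        push_cast at this
        linarith
      rw [h1, h2] at h5
      push_cast at h4
      have h6 : ((n:ℤ) + 5) * R (n+4) = (n+5) * r (n+4) := by
        rw [h5]; linarith
      exact mul_left_cancel₀ (by positivity) h6
  intro n hn
  obtain ⟨m, rfl⟩ := Nat.exists_eq_add_of_le hn
  have h := (key m).1
  rw [add_comm 2 m]
  have h2 := finrank_inv (m+2)
  rw [← h] at h2
  exact_mod_cast h2
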